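/- arXiv:2510.25400 — 2 statements merged into one kernel-verified Lean document; each statement's English description precedes it below -/
import Mathlib

section
/- Let n ≥ 12 and d ≥ 2 be integers, and let δ ∈ (e^{-n/6}, e^{-2}). Define λ_δ = max{1, log(1/δ)/√d} and the confidence-dependent smoothed estimator P̂_{n,δ} with coordinates p̂_j = (N_j + λ_δ)/(n + λ_δ d), where N_j counts occurrences of class j in an i.i.d. sample X_1, …, X_n from P ∈ Δ_d. Then, with C₃ = 91190, the probability that χ²(P, P̂_{n,δ}) ≥ C₃ · ( d/n + √d·log(1/δ)/n + d·log²(1/δ)/n² ) is at most 4δ. -/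
open Finset

/-- Probability of an event `E` under an i.i.d. sample of size `n` from the
distribution `p` on `{1, …, d}`. -/
noncomputable def sampleProb {n d : ℕ} (p : Fin d → ℝ) (E : Set (Fin n → Fin d)) : ℝ :=
  ∑ x : Fin n → Fin d, Set.indicator E (fun y => ∏ i, p (y i)) x

/-- Count of class `j` in the sample `x`. -/
def count {n d : ℕ} (x : Fin n → Fin d) (j : Fin d) : ℕ :=
  (Finset.univ.filter (fun i => x i = j)).card

/-- χ²-divergence between two vectors (all coordinates of `q` positive). -/
noncomputable def chiSq {d : ℕ} (p q : Fin d → ℝ) : ℝ :=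
  ∑ j, (p j - q j) ^ 2 / q j

/-!
Write `μ_j = n p_j`. Two statistics of the counts control the divergence: `∑ (N_j - μ_j)² / max N_j
μ_j`, and `∑ μ_j²` over the classes with `N_j < μ_j / 2`. Each is tamed by an exponential moment.
The counts are dependent, but if `|u_j| ≤ 1` then `∏ exp (u_j (N_j - μ_j) - μ_j u_j²)` has
expectation at most `1`, so a product of functions of the individual counts, each dominated by a
mixture of such exponential tilts, has expectation at most the product of the masses of the
mixtures. The term `μ_j²` of an undercounted class is too large for an exponential moment, so it is
first truncated to `min (μ_j² / A) μ_j`; as long as the truncated sum is at most `A`, no truncation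
has an effect.
-/

section

open Real

variable {n d : ℕ} {p : Fin d → ℝ}

/-- Expectation of `f` under an i.i.d. sample of size `n` from `p`; it turns the events measured by
`sampleProb` into moments. -/
noncomputable def sampleExp (p : Fin d → ℝ) (f : (Fin n → Fin d) → ℝ) : ℝ :=
  ∑ x, (∏ i, p (x i)) * f x

lemma sampleExp_mono (hp : ∀ j, 0 ≤ p j) {f g : (Fin n → Fin d) → ℝ} (h : ∀ x, f x ≤ g x) :
    sampleExp p f ≤ sampleExp p g :=
  sum_le_sum fun x _ => mul_le_mul_of_nonneg_left (h x) (prod_nonneg fun _ _ => hp _)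

lemma sampleExp_const_mul (c : ℝ) (f : (Fin n → Fin d) → ℝ) :
    sampleExp p (fun x => c * f x) = c * sampleExp p f := by
  simp only [sampleExp, mul_sum, mul_left_comm]

lemma sampleExp_sum {ι : Type*} (s : Finset ι) (f : ι → (Fin n → Fin d) → ℝ) :
    sampleExp p (fun x => ∑ k ∈ s, f k x) = ∑ k ∈ s, sampleExp p (f k) := by
  simp only [sampleExp, mul_sum]
  exact sum_comm

lemma sampleProb_eq_sampleExp (E : Set (Fin n → Fin d)) :
    sampleProb p E = sampleExp p (E.indicator 1) := by
  classical
  simp only [sampleProb, sampleExp, Set.indicator_apply, Pi.one_apply, mul_ite, mul_one, mul_zero]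

lemma sampleProb_mono (hp : ∀ j, 0 ≤ p j) {E F : Set (Fin n → Fin d)} (h : E ⊆ F) :
    sampleProb p E ≤ sampleProb p F := by
  simp only [sampleProb_eq_sampleExp]
  exact sampleExp_mono hp (Set.indicator_le_indicator_of_subset h fun _ => zero_le_one)

lemma sampleProb_union_le (hp : ∀ j, 0 ≤ p j) (E F : Set (Fin n → Fin d)) :
    sampleProb p (E ∪ F) ≤ sampleProb p E + sampleProb p F := by
  classical
  simp only [sampleProb, ← sum_add_distrib]
  refine sum_le_sum fun x _ => ?_
  have hw : 0 ≤ ∏ i, p (x i) := prod_nonneg fun _ _ => hp _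
  by_cases hE : x ∈ E <;> by_cases hF : x ∈ F <;> simp [hE, hF, hw]

lemma sampleProb_ge_le_exp_mul_sampleExp (hp : ∀ j, 0 ≤ p j) (f : (Fin n → Fin d) → ℝ) {c : ℝ}
    (hc : 0 ≤ c) (t : ℝ) :
    sampleProb p {x | t ≤ f x} ≤ exp (-(c * t)) * sampleExp p (fun x => exp (c * f x)) := by
  rw [sampleProb_eq_sampleExp, ← sampleExp_const_mul]
  refine sampleExp_mono hp (Set.indicator_le' (fun x hx => ?_) fun x _ => by positivity)
  rw [← exp_add, Pi.one_apply, one_le_exp_iff]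
  linarith [mul_le_mul_of_nonneg_left (show t ≤ f x from hx) hc]

/-! ### Exponential tilts of the counts -/

lemma count_le (x : Fin n → Fin d) (j : Fin d) : count x j ≤ n :=
  (card_le_univ _).trans_eq (Fintype.card_fin n)

lemma prod_comp_eq_prod_pow_count (x : Fin n → Fin d) (f : Fin d → ℝ) :
    ∏ i, f (x i) = ∏ j, f j ^ count x j := by
  simp only [← prod_fiberwise' univ x f, prod_const, count]

lemma sampleExp_prod_pow_count (f : Fin d → ℝ) :
    sampleExp p (fun x : Fin n → Fin d => ∏ j, f j ^ count x j) = (∑ j, p j * f j) ^ n := by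
  simp only [sampleExp, ← prod_comp_eq_prod_pow_count, ← prod_mul_distrib, Fintype.sum_pow]

/-- The exponential tilt with parameter `u` of a count `x` of mean `μ`, normalized so that its
expectation is at most `1` when `|u| ≤ 1`. -/
noncomputable def tilt (μ u x : ℝ) : ℝ := exp (u * (x - μ) - μ * u ^ 2)

lemma tilt_natCast (μ u : ℝ) (N : ℕ) :
    tilt μ u N = exp (-(μ * (u + u ^ 2))) * exp u ^ N := by
  rw [tilt, ← exp_nat_mul, ← exp_add]
  ring_nf

lemma sum_mul_exp_le (hp : p ∈ stdSimplex ℝ (Fin d)) {u : Fin d → ℝ} (hu : ∀ j, |u j| ≤ 1) :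
    ∑ j, p j * exp (u j) ≤ exp (∑ j, p j * (u j + u j ^ 2)) :=
  calc ∑ j, p j * exp (u j)
    _ ≤ ∑ j, p j * (u j + u j ^ 2 + 1) := by
        refine sum_le_sum fun j _ => mul_le_mul_of_nonneg_left ?_ (hp.1 j)
        linarith [le_of_abs_le (abs_exp_sub_one_sub_id_le (hu j))]
    _ = ∑ j, p j * (u j + u j ^ 2) + 1 := by
        simp only [mul_add _ _ (1 : ℝ), mul_one, sum_add_distrib, hp.2]
    _ ≤ exp (∑ j, p j * (u j + u j ^ 2)) := add_one_le_exp _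

lemma sampleExp_prod_tilt_le_one (hp : p ∈ stdSimplex ℝ (Fin d)) {u : Fin d → ℝ}
    (hu : ∀ j, |u j| ≤ 1) :
    sampleExp p (fun x : Fin n → Fin d => ∏ j, tilt (n * p j) (u j) (count x j)) ≤ 1 := by
  set v := ∑ j, p j * (u j + u j ^ 2) with hv
  have hnorm : ∏ j, exp (-(n * p j * (u j + u j ^ 2))) = exp (-(n * v)) := by
    rw [← exp_sum, sum_neg_distrib, hv, mul_sum]
    simp only [mul_assoc]
  have hnonneg : 0 ≤ ∑ j, p j * exp (u j) :=
    sum_nonneg fun j _ => mul_nonneg (hp.1 j) (exp_pos _).le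
  simp only [tilt_natCast, prod_mul_distrib, sampleExp_const_mul, sampleExp_prod_pow_count, hnorm]
  calc exp (-(n * v)) * (∑ j, p j * exp (u j)) ^ n
    _ ≤ exp (-(n * v)) * exp v ^ n := by gcongr; exact sum_mul_exp_le hp hu
    _ = 1 := by rw [← exp_nat_mul, ← exp_add, neg_add_cancel, exp_zero]

lemma sampleExp_prod_le_prod_sum {ι : Type*} [Fintype ι] (hp : p ∈ stdSimplex ℝ (Fin d))
    {G : Fin d → ℕ → ℝ} {a u : Fin d → ι → ℝ} (ha : ∀ j k, 0 ≤ a j k) (hu : ∀ j k, |u j k| ≤ 1)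
    (hG_nonneg : ∀ j N, 0 ≤ G j N)
    (hG : ∀ j, ∀ N ≤ n, G j N ≤ ∑ k, a j k * tilt (n * p j) (u j k) N) :
    sampleExp p (fun x : Fin n → Fin d => ∏ j, G j (count x j)) ≤ ∏ j, ∑ k, a j k := by
  classical
  calc sampleExp p (fun x : Fin n → Fin d => ∏ j, G j (count x j))
    _ ≤ sampleExp p (fun x : Fin n → Fin d =>
          ∏ j, ∑ k, a j k * tilt (n * p j) (u j k) (count x j)) :=
        sampleExp_mono hp.1 fun x => prod_le_prod (fun j _ => hG_nonneg j _)
          fun j _ => hG j _ (count_le x j)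
    _ = ∑ κ : Fin d → ι, (∏ j, a j (κ j)) * sampleExp p (fun x : Fin n → Fin d =>
          ∏ j, tilt (n * p j) (u j (κ j)) (count x j)) := by
        simp only [prod_univ_sum, Fintype.piFinset_univ, prod_mul_distrib, sampleExp_sum,
          sampleExp_const_mul]
    _ ≤ ∑ κ : Fin d → ι, ∏ j, a j (κ j) :=
        sum_le_sum fun κ _ => mul_le_of_le_one_right (prod_nonneg fun j _ => ha _ _)
          (sampleExp_prod_tilt_le_one hp fun j => hu j (κ j))
    _ = ∏ j, ∑ k, a j k := by simp only [prod_univ_sum, Fintype.piFinset_univ]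

/-! ### Relative squared deviations -/

/-- The squared deviation of a count `x` from its mean `μ`, relative to the larger of the two. It is
`0` when `x = μ = 0`. -/
noncomputable def relSqDev (μ x : ℝ) : ℝ := (x - μ) ^ 2 / max x μ

lemma relSqDev_nonneg (μ : ℝ) {x : ℝ} (hx : 0 ≤ x) : 0 ≤ relSqDev μ x :=
  div_nonneg (sq_nonneg _) (le_max_of_le_left hx)

lemma abs_sub_le_max {μ x : ℝ} (hμ : 0 ≤ μ) (hx : 0 ≤ x) : |x - μ| ≤ max x μ :=
  abs_sub_le_of_nonneg_of_le hx (le_max_left x μ) hμ (le_max_right x μ)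

lemma relSqDev_mul_max {μ x : ℝ} (hμ : 0 ≤ μ) (hx : 0 ≤ x) :
    relSqDev μ x * max x μ = (x - μ) ^ 2 := by
  refine div_mul_cancel_of_imp fun hmax => ?_
  rw [sq_eq_zero_iff, ← abs_nonpos_iff, ← hmax]
  exact abs_sub_le_max hμ hx

lemma relSqDev_le_abs {μ x : ℝ} (hμ : 0 ≤ μ) (hx : 0 ≤ x) : relSqDev μ x ≤ |x - μ| := by
  refine div_le_of_le_mul₀ (le_max_of_le_left hx) (abs_nonneg _) ?_
  rw [← sq_abs, sq]
  exact mul_le_mul_of_nonneg_left (abs_sub_le_max hμ hx) (abs_nonneg _)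

/-- The tilting parameter that detects a relative squared deviation of size `m` from the mean `μ`:
for `m ≤ μ` it is the maximizer `√(m / μ) / 2` of `u * √(m * μ) - μ * u ^ 2`, and for `m > μ` it is
capped at `1 / 2`. -/
noncomputable def tiltParam (μ m : ℝ) : ℝ := √(m / max m μ) / 2

lemma tiltParam_nonneg (μ m : ℝ) : 0 ≤ tiltParam μ m := by unfold tiltParam; positivity

lemma tiltParam_le_one (μ : ℝ) {m : ℝ} (hm : 0 ≤ m) : tiltParam μ m ≤ 1 := by
  have hsqrt : √(m / max m μ) ≤ 1 :=
    sqrt_le_one.2 (div_le_one_of_le₀ (le_max_left _ _) (le_max_of_le_left hm))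
  unfold tiltParam
  linarith

lemma mul_tiltParam_sq_le {μ m : ℝ} (hm : 0 ≤ m) : μ * tiltParam μ m ^ 2 ≤ m / 4 := by
  have hmax : 0 ≤ max m μ := le_max_of_le_left hm
  have hle : m / max m μ * μ ≤ m := by
    rw [div_mul_eq_mul_div]
    exact div_le_of_le_mul₀ hmax hm (mul_le_mul_of_nonneg_left (le_max_right _ _) hm)
  rw [tiltParam, div_pow, sq_sqrt (by positivity)]
  linarith

lemma half_le_tiltParam_mul_abs {μ x m : ℝ} (hμ : 0 ≤ μ) (hx : 0 ≤ x) (hm : 0 ≤ m)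
    (h : m ≤ relSqDev μ x) : m / 2 ≤ tiltParam μ m * |x - μ| := by
  rcases hm.eq_or_lt with rfl | hm'
  · simp [tiltParam]
  have habs : m ≤ |x - μ| := h.trans (relSqDev_le_abs hμ hx)
  have hmean : m * μ ≤ |x - μ| ^ 2 := by
    rw [sq_abs, ← relSqDev_mul_max hμ hx]
    exact mul_le_mul h (le_max_right _ _) hμ (relSqDev_nonneg μ hx)
  have hmax : m * max m μ ≤ |x - μ| ^ 2 := by
    rw [mul_max_of_nonneg _ _ hm]
    exact max_le (by nlinarith) hmean
  have hsqrt : m ≤ √(m / max m μ) * |x - μ| := by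
    refine le_of_sq_le_sq ?_ (by positivity)
    have hpos : 0 < max m μ := lt_max_of_lt_left hm'
    rw [mul_pow, sq_sqrt (by positivity), div_mul_eq_mul_div, le_div_iff₀ hpos]
    nlinarith
  rw [tiltParam]
  linarith

lemma exists_exp_div_four_le_tilt {μ x m : ℝ} (hμ : 0 ≤ μ) (hx : 0 ≤ x) (hm : 0 ≤ m)
    (h : m ≤ relSqDev μ x) :
    ∃ up : Bool, exp (m / 4) ≤ tilt μ (bif up then tiltParam μ m else -tiltParam μ m) x := by
  have hsq := mul_tiltParam_sq_le (μ := μ) hm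
  have hlin := half_le_tiltParam_mul_abs hμ hx hm h
  simp only [tilt, exp_le_exp]
  rcases le_or_gt μ x with hle | hlt
  · rw [abs_of_nonneg (sub_nonneg.2 hle)] at hlin
    refine ⟨true, ?_⟩
    simp only [cond_true]
    linarith
  · rw [abs_of_neg (sub_neg.2 hlt)] at hlin
    refine ⟨false, ?_⟩
    simp only [cond_false, neg_sq]
    linarith

/-- The term of the mixture that matches `x` is given by the integer part of the relative squared
deviation and the direction of the deviation. -/
lemma exp_relSqDev_le_sum_tilt {μ x : ℝ} {M : ℕ} (hμ : 0 ≤ μ) (hx : 0 ≤ x) (hμM : μ ≤ M)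
    (hxM : x ≤ M) :
    exp (1 / 8 * relSqDev μ x) ≤ ∑ k : Fin (M + 1) × Bool,
      exp ((1 - k.1) / 8) * tilt μ (bif k.2 then tiltParam μ k.1 else -tiltParam μ k.1) x := by
  have hfloor := Nat.floor_le (relSqDev_nonneg μ hx)
  have hfloor_lt := Nat.lt_floor_add_one (relSqDev μ x)
  obtain ⟨m, hm⟩ : ∃ m : Fin (M + 1), (m : ℕ) = ⌊relSqDev μ x⌋₊ := by
    refine ⟨⟨⌊relSqDev μ x⌋₊, Nat.lt_succ_of_le (Nat.floor_le_of_le ?_)⟩, rfl⟩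
    exact (relSqDev_le_abs hμ hx).trans ((abs_sub_le_max hμ hx).trans (max_le hxM hμM))
  rw [← hm] at hfloor hfloor_lt
  obtain ⟨up, hup⟩ := exists_exp_div_four_le_tilt hμ hx (Nat.cast_nonneg m) hfloor
  have hterm (k : Fin (M + 1) × Bool) : 0 ≤ exp ((1 - k.1) / 8) *
      tilt μ (bif k.2 then tiltParam μ k.1 else -tiltParam μ k.1) x :=
    mul_nonneg (exp_pos _).le (exp_pos _).le
  calc exp (1 / 8 * relSqDev μ x)
    _ ≤ exp ((1 - m) / 8) * exp (m / 4) := by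
        rw [← exp_add, exp_le_exp]
        linarith
    _ ≤ exp ((1 - m) / 8) * tilt μ (bif up then tiltParam μ m else -tiltParam μ m) x := by
        gcongr
    _ ≤ _ := single_le_sum (fun k _ => hterm k) (mem_univ (m, up))

lemma sum_exp_one_sub_div_eight_le (k : ℕ) :
    ∑ m ∈ range k, exp ((1 - m) / 8) ≤ 8 * exp (1 / 4) := by
  suffices h : ∑ m ∈ range k, exp ((1 - m) / 8) ≤ 8 * exp (1 / 4) - 8 * exp ((2 - k) / 8) by
    linarith [exp_pos ((2 - k : ℝ) / 8)]
  induction k with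
  | zero => norm_num
  | succ k ih =>
    have hstep : (1 / 8 + 1) * exp ((1 - k) / 8) ≤ exp ((2 - k) / 8) := by
      rw [show ((2 : ℝ) - k) / 8 = 1 / 8 + (1 - k) / 8 by ring, exp_add]
      gcongr
      exact add_one_le_exp _
    rw [sum_range_succ, Nat.cast_succ, show (2 : ℝ) - (k + 1) = 1 - k by ring]
    linarith

lemma sixteen_mul_exp_one_fourth_le : 16 * exp (1 / 4) ≤ exp 4 := by
  have h16 : (16 : ℝ) = exp (4 * log 2) := by
    rw [mul_comm, exp_mul, exp_log two_pos]
    norm_num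
  rw [h16, ← exp_add, exp_le_exp]
  linarith [log_two_lt_d9]

lemma sampleExp_exp_sum_relSqDev_le (hp : p ∈ stdSimplex ℝ (Fin d)) :
    sampleExp p (fun x : Fin n → Fin d => exp (1 / 8 * ∑ j, relSqDev (n * p j) (count x j))) ≤
      exp (4 * d) := by
  have hp_le_one (j : Fin d) : p j ≤ 1 := (mem_Icc_of_mem_stdSimplex hp j).2
  have hmix := sampleExp_prod_le_prod_sum (n := n) (ι := Fin (n + 1) × Bool) hp
    (G := fun j N => exp (1 / 8 * relSqDev (n * p j) N))
    (a := fun _ k => exp ((1 - k.1) / 8))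
    (u := fun j k => bif k.2 then tiltParam (n * p j) k.1 else -tiltParam (n * p j) k.1)
    (fun _ _ => (exp_pos _).le)
    (fun j ⟨m, up⟩ => by
      have habs : |tiltParam (n * p j) m| ≤ 1 := by
        rw [abs_of_nonneg (tiltParam_nonneg _ _)]
        exact tiltParam_le_one _ (Nat.cast_nonneg _)
      cases up <;> simpa using habs)
    (fun _ _ => (exp_pos _).le)
    (fun j N hN => exp_relSqDev_le_sum_tilt (mul_nonneg n.cast_nonneg (hp.1 j)) N.cast_nonneg
      (mul_le_of_le_one_right n.cast_nonneg (hp_le_one j)) (mod_cast hN))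
  have hmass : ∑ k : Fin (n + 1) × Bool, exp ((1 - k.1) / 8) ≤ exp 4 := by
    have hgeom := sum_exp_one_sub_div_eight_le (n + 1)
    rw [← Fin.sum_univ_eq_sum_range (fun m => exp ((1 - m) / 8))] at hgeom
    simp only [Fintype.sum_prod_type, Fintype.sum_bool, sum_add_distrib]
    linarith [sixteen_mul_exp_one_fourth_le]
  simp only [mul_sum, exp_sum]
  calc _ ≤ ∏ _j : Fin d, ∑ k : Fin (n + 1) × Bool, exp ((1 - k.1) / 8) := hmix
    _ ≤ ∏ _j : Fin d, exp 4 :=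
        prod_le_prod (fun _ _ => sum_nonneg fun _ _ => (exp_pos _).le) fun _ _ => hmass
    _ = exp (4 * d) := by rw [prod_const, card_univ, Fintype.card_fin, ← exp_nat_mul, mul_comm]

lemma sampleProb_sum_relSqDev_ge_le (hp : p ∈ stdSimplex ℝ (Fin d)) (L : ℝ) :
    sampleProb p {x : Fin n → Fin d |
      32 * d + 8 * L ≤ ∑ j, relSqDev (n * p j) (count x j)} ≤ exp (-L) :=
  calc _ ≤ exp (-(1 / 8 * (32 * d + 8 * L))) * exp (4 * d) :=
        (sampleProb_ge_le_exp_mul_sampleExp hp.1 _ (by norm_num) _).trans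
          (mul_le_mul_of_nonneg_left (sampleExp_exp_sum_relSqDev_le hp) (exp_pos _).le)
    _ = exp (-L) := by rw [← exp_add]; ring_nf

/-! ### Undercounted classes -/

/-- The square of a mean `μ`, rescaled by `A` and truncated so that it is linear in `μ`. -/
noncomputable def truncSq (A μ : ℝ) : ℝ := min (μ ^ 2 / A) μ

lemma truncSq_nonneg {A μ : ℝ} (hA : 0 ≤ A) (hμ : 0 ≤ μ) : 0 ≤ truncSq A μ :=
  le_min (by positivity) hμ

lemma sq_le_of_truncSq_le {A μ : ℝ} (hA : 0 < A) (hμ : 0 ≤ μ) (h : truncSq A μ ≤ A) :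
    μ ^ 2 ≤ A * truncSq A μ := by
  rcases min_choice (μ ^ 2 / A) μ with hmin | hmin
  · rw [truncSq, hmin, mul_div_cancel₀ _ hA.ne']
  · have htrunc : truncSq A μ = μ := hmin
    rw [htrunc] at h ⊢
    rw [sq]
    exact mul_le_mul_of_nonneg_right h hμ

/-- The indicator that a count `x` is less than half of its mean `μ`, weighted by `c`. -/
noncomputable def undercount (c μ x : ℝ) : ℝ := if x < μ / 2 then c else 0

lemma undercount_nonneg {c : ℝ} (hc : 0 ≤ c) (μ x : ℝ) : 0 ≤ undercount c μ x := by
  unfold undercount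
  positivity

lemma sum_undercount_sq_le {ι : Type*} [Fintype ι] {μ x : ι → ℝ} (hμ : ∀ j, 0 ≤ μ j) {A : ℝ}
    (hA : 0 < A) (h : ∑ j, undercount (truncSq A (μ j)) (μ j) (x j) ≤ A) :
    ∑ j, undercount (μ j ^ 2) (μ j) (x j) ≤ A ^ 2 := by
  have hle (j : ι) : undercount (truncSq A (μ j)) (μ j) (x j) ≤ A :=
    (single_le_sum (f := fun j => undercount (truncSq A (μ j)) (μ j) (x j))
      (fun i _ => undercount_nonneg (truncSq_nonneg hA.le (hμ i)) _ _) (mem_univ j)).trans h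
  calc ∑ j, undercount (μ j ^ 2) (μ j) (x j)
    _ ≤ ∑ j, A * undercount (truncSq A (μ j)) (μ j) (x j) := by
        refine sum_le_sum fun j _ => ?_
        have hj := hle j
        unfold undercount at hj ⊢
        split_ifs at hj ⊢ with hlt
        · exact sq_le_of_truncSq_le hA (hμ j) hj
        · rw [mul_zero]
    _ ≤ A ^ 2 := by
        rw [← mul_sum, sq]
        exact mul_le_mul_of_nonneg_left h hA.le

lemma one_le_tilt_neg_quarter {μ x : ℝ} (h : x < μ / 2) :
    1 ≤ exp (-μ / 16) * tilt μ (-1 / 4) x := by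
  rw [tilt, ← exp_add, one_le_exp_iff]
  linarith

/-- The mixture weight of the tilt `-1 / 4` in the bound for `exp (undercount z μ x / 32)`. -/
noncomputable def undercountWeight (z μ : ℝ) : ℝ := (exp (z / 32) - 1) * exp (-μ / 16)

lemma undercountWeight_nonneg {z : ℝ} (hz : 0 ≤ z) (μ : ℝ) : 0 ≤ undercountWeight z μ :=
  mul_nonneg (sub_nonneg.2 (one_le_exp (by positivity))) (exp_pos _).le

lemma undercountWeight_le {z μ : ℝ} (hz : 0 ≤ z) (hzμ : z ≤ μ) :
    undercountWeight z μ ≤ z / 32 * exp (-μ / 32) := by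
  have hsub : exp (z / 32) - 1 ≤ z / 32 * exp (z / 32) := by
    have hinv : exp (-(z / 32)) * exp (z / 32) = 1 := by rw [← exp_add, neg_add_cancel, exp_zero]
    nlinarith [one_sub_le_exp_neg (z / 32), exp_pos (z / 32)]
  calc undercountWeight z μ
    _ ≤ z / 32 * exp (z / 32) * exp (-μ / 16) := mul_le_mul_of_nonneg_right hsub (exp_pos _).le
    _ = z / 32 * exp (z / 32 + -μ / 16) := by rw [mul_assoc, ← exp_add]
    _ ≤ z / 32 * exp (-μ / 32) := by gcongr; linarith

lemma exp_undercount_le {z : ℝ} (hz : 0 ≤ z) (μ x : ℝ) :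
    exp (1 / 32 * undercount z μ x) ≤ 1 + undercountWeight z μ * tilt μ (-1 / 4) x := by
  unfold undercount
  split_ifs with hlt
  · have hexp : 0 ≤ exp (z / 32) - 1 := sub_nonneg.2 (one_le_exp (by positivity))
    have hmul := mul_le_mul_of_nonneg_left (one_le_tilt_neg_quarter hlt) hexp
    rw [one_div_mul_eq_div, undercountWeight, mul_assoc]
    linarith
  · rw [mul_zero, exp_zero, le_add_iff_nonneg_right]
    exact mul_nonneg (undercountWeight_nonneg hz μ) (exp_pos _).le

lemma sq_mul_exp_neg_le_min {y : ℝ} (hy : 0 ≤ y) : y ^ 2 * exp (-y) ≤ min 1 y := by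
  have hinv : exp y * exp (-y) = 1 := by rw [← exp_add, add_neg_cancel, exp_zero]
  have hsq : y ^ 2 ≤ exp y := by
    rw [← add_halves y, exp_add, ← sq, add_halves]
    exact pow_le_pow_left₀ hy (by linarith [two_mul_le_exp (x := y / 2)]) 2
  have hlin : y ≤ exp y := by linarith [add_one_le_exp y]
  refine le_min ?_ ?_
  · rw [← hinv]
    exact mul_le_mul_of_nonneg_right hsq (exp_pos _).le
  · calc y ^ 2 * exp (-y) = y * (y * exp (-y)) := by ring
      _ ≤ y * (exp y * exp (-y)) := by gcongr
      _ = y := by rw [hinv, mul_one]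

lemma sum_sq_mul_exp_neg_le (hp : p ∈ stdSimplex ℝ (Fin d)) :
    ∑ j, (n * p j) ^ 2 * exp (-(n * p j) / 32) ≤ 1024 * min (n : ℝ) d := by
  have hterm (j : Fin d) :
      (n * p j) ^ 2 * exp (-(n * p j) / 32) ≤ min 1024 (1024 * (n * p j)) := by
    have hmean : 0 ≤ n * p j := mul_nonneg n.cast_nonneg (hp.1 j)
    have hscaled := sq_mul_exp_neg_le_min (y := n * p j / 32) (by positivity)
    rw [← neg_div, div_pow] at hscaled
    refine le_min ?_ ?_
    · linarith [hscaled.trans (min_le_left _ _)]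
    · linarith [hscaled.trans (min_le_right _ _)]
  rw [mul_min_of_nonneg _ _ (by norm_num)]
  refine le_min ?_ ?_
  · calc _ ≤ ∑ j, 1024 * (n * p j) := sum_le_sum fun j _ => (hterm j).trans (min_le_right _ _)
      _ = 1024 * n := by rw [← mul_sum, ← mul_sum, hp.2, mul_one]
  · calc _ ≤ ∑ _j : Fin d, (1024 : ℝ) := sum_le_sum fun j _ => (hterm j).trans (min_le_left _ _)
      _ = 1024 * d := by rw [sum_const, card_univ, Fintype.card_fin, nsmul_eq_mul, mul_comm]

lemma sampleExp_exp_sum_undercount_le (hp : p ∈ stdSimplex ℝ (Fin d)) {z : Fin d → ℝ}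
    (hz : ∀ j, 0 ≤ z j) :
    sampleExp p (fun x : Fin n → Fin d =>
      exp (1 / 32 * ∑ j, undercount (z j) (n * p j) (count x j))) ≤
      exp (∑ j, undercountWeight (z j) (n * p j)) := by
  have hweight (j : Fin d) := undercountWeight_nonneg (hz j) (n * p j)
  have hmix := sampleExp_prod_le_prod_sum (n := n) (ι := Bool) hp
    (G := fun j N => exp (1 / 32 * undercount (z j) (n * p j) N))
    (a := fun j k => bif k then 1 else undercountWeight (z j) (n * p j))
    (u := fun _ k => bif k then 0 else -1 / 4)
    (fun j k => by cases k <;> simp [hweight j])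
    (fun _ k => by cases k <;> norm_num [abs_le])
    (fun _ _ => (exp_pos _).le)
    (fun j N _ => by simpa [tilt] using exp_undercount_le (hz j) (n * p j) N)
  simp only [mul_sum, exp_sum]
  refine hmix.trans (prod_le_prod (fun j _ => ?_) fun j _ => ?_)
  · simpa using add_nonneg zero_le_one (hweight j)
  · simpa [add_comm] using add_one_le_exp (undercountWeight (z j) (n * p j))

lemma sum_undercountWeight_truncSq_le (hp : p ∈ stdSimplex ℝ (Fin d)) {A : ℝ} (hA : 0 < A) :
    ∑ j, undercountWeight (truncSq A (n * p j)) (n * p j) ≤ 32 * min (n : ℝ) d / A := by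
  have hmean (j : Fin d) : 0 ≤ n * p j := mul_nonneg n.cast_nonneg (hp.1 j)
  calc ∑ j, undercountWeight (truncSq A (n * p j)) (n * p j)
    _ ≤ ∑ j, (n * p j) ^ 2 / A / 32 * exp (-(n * p j) / 32) := by
        refine sum_le_sum fun j _ => (undercountWeight_le (truncSq_nonneg hA.le (hmean j))
          (min_le_right _ _)).trans ?_
        gcongr
        exact min_le_left _ _
    _ = (∑ j, (n * p j) ^ 2 * exp (-(n * p j) / 32)) / (32 * A) := by
        rw [sum_div]
        exact sum_congr rfl fun j _ => by ring
    _ ≤ 1024 * min (n : ℝ) d / (32 * A) := by gcongr; exact sum_sq_mul_exp_neg_le hp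
    _ = 32 * min (n : ℝ) d / A := by ring

lemma sampleProb_sum_undercount_ge_le (hp : p ∈ stdSimplex ℝ (Fin d)) {A L : ℝ} (hL : 0 < L)
    (hA : A = 32 * (√(min n d) + L)) :
    sampleProb p {x : Fin n → Fin d |
      A ≤ ∑ j, undercount (truncSq A (n * p j)) (n * p j) (count x j)} ≤ exp (-L) := by
  set s := √(min (n : ℝ) d)
  have hs : s ^ 2 = min (n : ℝ) d := sq_sqrt (by positivity)
  have hs0 : 0 ≤ s := sqrt_nonneg _
  have hA0 : 0 < A := by rw [hA]; positivity
  have hmgf : ∑ j, undercountWeight (truncSq A (n * p j)) (n * p j) ≤ s := by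
    refine (sum_undercountWeight_truncSq_le hp hA0).trans ?_
    rw [div_le_iff₀ hA0, ← hs, hA]
    nlinarith [mul_nonneg hs0 hL.le]
  calc _ ≤ exp (-(1 / 32 * A)) * exp s :=
        (sampleProb_ge_le_exp_mul_sampleExp hp.1 _ (by norm_num) _).trans
          (mul_le_mul_of_nonneg_left ((sampleExp_exp_sum_undercount_le hp fun j =>
            truncSq_nonneg hA0.le (mul_nonneg n.cast_nonneg (hp.1 j))).trans
              (exp_le_exp.2 hmgf)) (exp_pos _).le)
    _ = exp (-L) := by rw [hA, ← exp_add]; ring_nf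

/-! ### The divergence from the smoothed frequencies -/

lemma sub_smoothed_sq_div_le {n d l p x : ℝ} (hn : 0 < n) (hd : 0 < d) (hl : 0 < l) (hp : 0 ≤ p)
    (hx : 0 ≤ x) :
    (p - (x + l) / (n + l * d)) ^ 2 / ((x + l) / (n + l * d)) ≤
      2 * ((x - n * p) ^ 2 + (l * d * p) ^ 2 + l ^ 2) / ((n + l * d) * (x + l)) := by
  have hnumer : ((n * p - x) + l * (d * p - 1)) ^ 2 ≤
      2 * ((x - n * p) ^ 2 + (l * d * p) ^ 2 + l ^ 2) := by
    have hcross : 0 ≤ l ^ 2 * (d * p) := by positivity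
    nlinarith [add_sq_le (a := n * p - x) (b := l * (d * p - 1))]
  calc (p - (x + l) / (n + l * d)) ^ 2 / ((x + l) / (n + l * d))
    _ = ((n * p - x) + l * (d * p - 1)) ^ 2 / ((n + l * d) * (x + l)) := by
        field_simp
        ring
    _ ≤ _ := by gcongr

lemma sq_div_smoothing_le {n d l x : ℝ} (hn : 0 < n) (hd : 0 < d) (hl : 0 < l) (hx : 0 ≤ x) :
    l ^ 2 / ((n + l * d) * (x + l)) ≤ l / n :=
  calc l ^ 2 / ((n + l * d) * (x + l)) ≤ l ^ 2 / (n * l) := by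
        gcongr
        · exact le_add_of_nonneg_right (by positivity)
        · exact le_add_of_nonneg_left hx
    _ = l / n := by field_simp

lemma sq_add_sq_div_le_of_half_le {n d l p x : ℝ} (hn : 0 < n) (hd : 0 < d) (hl : 0 < l)
    (hp : 0 ≤ p) (hx : 0 ≤ x) (h : n * p / 2 ≤ x) :
    ((x - n * p) ^ 2 + (l * d * p) ^ 2) / ((n + l * d) * (x + l)) ≤
      2 * relSqDev (n * p) x / n + 2 * (l * d / n) * p := by
  have hr : 0 ≤ relSqDev (n * p) x := relSqDev_nonneg _ hx
  have hmax : max x (n * p) ≤ 2 * (x + l) := max_le (by linarith) (by linarith)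
  have hdev : (x - n * p) ^ 2 / ((n + l * d) * (x + l)) ≤ 2 * relSqDev (n * p) x / n := by
    rw [div_le_div_iff₀ (by positivity) hn, ← relSqDev_mul_max (by positivity) hx]
    calc relSqDev (n * p) x * max x (n * p) * n
      _ ≤ relSqDev (n * p) x * (2 * (x + l)) * (n + l * d) := by
          gcongr
          exact le_add_of_nonneg_right (by positivity)
      _ = 2 * relSqDev (n * p) x * ((n + l * d) * (x + l)) := by ring
  have hbias : (l * d * p) ^ 2 / ((n + l * d) * (x + l)) ≤ 2 * (l * d / n) * p := by
    rw [show 2 * (l * d / n) * p = 2 * (l * d) * p / n by ring,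
      div_le_div_iff₀ (by positivity) hn]
    calc (l * d * p) ^ 2 * n = l * d * p * (l * d) * (n * p) := by ring
      _ ≤ l * d * p * (n + l * d) * (2 * (x + l)) := by
          gcongr ?_ * ?_ * ?_
          · exact le_add_of_nonneg_left hn.le
          · exact (le_max_right _ _).trans hmax
      _ = 2 * (l * d) * p * ((n + l * d) * (x + l)) := by ring
  rw [add_div]
  exact add_le_add hdev hbias

lemma sq_add_sq_div_le_of_lt_half {n d l p x : ℝ} (hn : 0 < n) (hd : 0 < d) (hl : 0 < l)
    (hx : 0 ≤ x) (h : x < n * p / 2) :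
    ((x - n * p) ^ 2 + (l * d * p) ^ 2) / ((n + l * d) * (x + l)) ≤
      (n * p) ^ 2 * (1 / (n * l) + d / n ^ 2) := by
  have hdev : (x - n * p) ^ 2 / ((n + l * d) * (x + l)) ≤ (n * p) ^ 2 / (n * l) := by
    gcongr ?_ / (?_ * ?_)
    · nlinarith
    · exact le_add_of_nonneg_right (by positivity)
    · exact le_add_of_nonneg_left hx
  have hbias : (l * d * p) ^ 2 / ((n + l * d) * (x + l)) ≤ (l * d * p) ^ 2 / (l * d * l) := by
    gcongr
    · exact le_add_of_nonneg_left hn.le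
    · exact le_add_of_nonneg_left hx
  calc ((x - n * p) ^ 2 + (l * d * p) ^ 2) / ((n + l * d) * (x + l))
    _ ≤ (n * p) ^ 2 / (n * l) + (l * d * p) ^ 2 / (l * d * l) := by
        rw [add_div]
        exact add_le_add hdev hbias
    _ = (n * p) ^ 2 * (1 / (n * l) + d / n ^ 2) := by field_simp

lemma sub_smoothed_sq_div_le_undercount {n d l p x : ℝ} (hn : 0 < n) (hd : 0 < d) (hl : 0 < l)
    (hp : 0 ≤ p) (hx : 0 ≤ x) :
    (p - (x + l) / (n + l * d)) ^ 2 / ((x + l) / (n + l * d)) ≤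
      2 * (2 * relSqDev (n * p) x / n + 2 * (l * d / n) * p + l / n
        + undercount ((n * p) ^ 2) (n * p) x * (1 / (n * l) + d / n ^ 2)) := by
  have hr : 0 ≤ relSqDev (n * p) x := relSqDev_nonneg _ hx
  have hmain : ((x - n * p) ^ 2 + (l * d * p) ^ 2) / ((n + l * d) * (x + l)) ≤
      2 * relSqDev (n * p) x / n + 2 * (l * d / n) * p
        + undercount ((n * p) ^ 2) (n * p) x * (1 / (n * l) + d / n ^ 2) := by
    unfold undercount
    split_ifs with hlt
    · exact (sq_add_sq_div_le_of_lt_half hn hd hl hx hlt).trans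
        (le_add_of_nonneg_left (by positivity))
    · rw [zero_mul, add_zero]
      exact sq_add_sq_div_le_of_half_le hn hd hl hp hx (not_lt.1 hlt)
  refine (sub_smoothed_sq_div_le hn hd hl hp hx).trans ?_
  rw [mul_div_assoc, add_div]
  linarith [sq_div_smoothing_le hn hd hl hx]

lemma chiSq_smoothed_le (hp : p ∈ stdSimplex ℝ (Fin d)) {n : ℝ} (hn : 0 < n) {l : ℝ} (hl : 0 < l)
    {x : Fin d → ℝ} (hx : ∀ j, 0 ≤ x j) :
    chiSq p (fun j => (x j + l) / (n + l * d)) ≤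
      2 * (2 * (∑ j, relSqDev (n * p j) (x j)) / n + 3 * (l * d / n)
        + (∑ j, undercount ((n * p j) ^ 2) (n * p j) (x j)) * (1 / (n * l) + d / n ^ 2)) :=
  calc chiSq p (fun j => (x j + l) / (n + l * d))
    _ ≤ ∑ j, 2 * (2 * relSqDev (n * p j) (x j) / n + 2 * (l * d / n) * p j + l / n
        + undercount ((n * p j) ^ 2) (n * p j) (x j) * (1 / (n * l) + d / n ^ 2)) :=
        sum_le_sum fun j _ => sub_smoothed_sq_div_le_undercount hn
          (mod_cast j.pos) hl (hp.1 j) (hx j)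
    _ = _ := by
        simp only [← mul_sum, sum_add_distrib, ← sum_mul, ← sum_div, hp.2, sum_const, card_univ,
          Fintype.card_fin, nsmul_eq_mul]
        ring

/-! ### The confidence-dependent smoothing parameter -/

lemma max_one_div_sqrt_mul_le {d L : ℝ} (hd : 0 < d) (hL : 0 ≤ L) :
    max 1 (L / √d) * d ≤ d + √d * L :=
  calc max 1 (L / √d) * d ≤ (1 + L / √d) * d := by
        gcongr
        exact max_le_add_of_nonneg zero_le_one (by positivity)
    _ = d + L * (d / √d) := by ring
    _ = d + √d * L := by rw [div_sqrt, mul_comm L]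

lemma sq_div_max_one_div_sqrt_le {d L : ℝ} (hd : 0 < d) (hL : 0 ≤ L) :
    L ^ 2 / max 1 (L / √d) ≤ √d * L := by
  have hle : L ≤ √d * max 1 (L / √d) := (div_le_iff₀' (sqrt_pos.2 hd)).1 (le_max_right _ _)
  refine div_le_of_le_mul₀ (by positivity) (by positivity) ?_
  nlinarith

lemma add_sq_mul_smoothing_le {n d L l : ℝ} (hn : 0 < n) (hd : 0 < d) (hL : 0 ≤ L)
    (hl : l = max 1 (L / √d)) :
    (min n d + L ^ 2) * (1 / (n * l) + d / n ^ 2) ≤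
      2 * (d / n) + √d * L / n + d * L ^ 2 / n ^ 2 := by
  have hl1 : 1 ≤ l := hl ▸ le_max_left _ _
  have hmin : 0 ≤ min n d := le_min hn.le hd.le
  have hdim : min n d / l ≤ d := (div_le_self hmin hl1).trans (min_le_right _ _)
  have hconf : L ^ 2 / l ≤ √d * L := hl ▸ sq_div_max_one_div_sqrt_le hd hL
  have hratio : min n d / n ≤ 1 := div_le_one_of_le₀ (min_le_left _ _) hn.le
  calc (min n d + L ^ 2) * (1 / (n * l) + d / n ^ 2)
    _ = min n d / l / n + L ^ 2 / l / n + min n d / n * (d / n) + d * L ^ 2 / n ^ 2 := by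
        field_simp
        ring
    _ ≤ d / n + √d * L / n + 1 * (d / n) + d * L ^ 2 / n ^ 2 := by gcongr
    _ = _ := by ring

lemma smoothing_bound_lt_rate {n d L l : ℝ} (hn : 0 < n) (hd : 1 ≤ d) (hL : 0 < L)
    (hl : l = max 1 (L / √d)) :
    2 * (2 * (32 * d + 8 * L) / n + 3 * (l * d / n)
      + (32 * (√(min n d) + L)) ^ 2 * (1 / (n * l) + d / n ^ 2)) <
      8400 * (d / n + √d * L / n + d * L ^ 2 / n ^ 2) := by
  have hd0 : 0 < d := one_pos.trans_le hd
  have hlin : L / n ≤ √d * L / n := by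
    gcongr
    exact le_mul_of_one_le_left hL.le (one_le_sqrt.2 hd)
  have hsmooth : l * d / n ≤ d / n + √d * L / n := by
    rw [← add_div, hl]
    gcongr
    exact max_one_div_sqrt_mul_le hd0 hL.le
  have hsquare : (32 * (√(min n d) + L)) ^ 2 ≤ 2048 * (min n d + L ^ 2) := by
    have hsq : √(min n d) ^ 2 = min n d := sq_sqrt (le_min hn.le hd0.le)
    linarith [add_sq_le (a := √(min n d)) (b := L)]
  have hcoef : 0 ≤ 1 / (n * l) + d / n ^ 2 := by
    rw [hl]
    positivity
  have hunder := mul_le_mul_of_nonneg_right hsquare hcoef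
  have hdim : 0 < d / n := by positivity
  have hconf : 0 < √d * L / n := by positivity
  have hconf_sq : 0 < d * L ^ 2 / n ^ 2 := by positivity
  rw [show 2 * (32 * d + 8 * L) / n = 64 * (d / n) + 16 * (L / n) by ring]
  linarith [add_sq_mul_smoothing_le hn hd0 hL.le hl]

lemma chiSq_smoothed_lt_rate (hp : p ∈ stdSimplex ℝ (Fin d)) {n : ℝ} (hn : 0 < n) {A L l : ℝ}
    (hL : 0 < L) (hl : l = max 1 (L / √d)) (hA : A = 32 * (√(min n d) + L)) {x : Fin d → ℝ}
    (hx : ∀ j, 0 ≤ x j) (hdev : ∑ j, relSqDev (n * p j) (x j) ≤ 32 * d + 8 * L)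
    (hunder : ∑ j, undercount (truncSq A (n * p j)) (n * p j) (x j) ≤ A) :
    chiSq p (fun j => (x j + l) / (n + l * d)) <
      8400 * (d / n + √d * L / n + d * L ^ 2 / n ^ 2) := by
  have hd : (1 : ℝ) ≤ d := by
    obtain ⟨j, -, -⟩ := exists_ne_zero_of_sum_ne_zero (hp.2.trans_ne one_ne_zero)
    exact_mod_cast j.pos
  have hl0 : 0 < l := hl ▸ one_pos.trans_le (le_max_left _ _)
  have hA0 : 0 < A := by rw [hA]; positivity
  have hunder_sq := sum_undercount_sq_le (fun j => mul_nonneg hn.le (hp.1 j)) hA0 hunder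
  calc chiSq p (fun j => (x j + l) / (n + l * d))
    _ ≤ _ := chiSq_smoothed_le hp hn hl0 hx
    _ ≤ 2 * (2 * (32 * d + 8 * L) / n + 3 * (l * d / n)
          + A ^ 2 * (1 / (n * l) + d / n ^ 2)) := by gcongr
    _ < _ := hA ▸ smoothing_bound_lt_rate hn hd hL hl

end

theorem conf_dependent_upper_bound_general {n d : ℕ} (hn : 0 < n) {δ : ℝ} (hδ0 : 0 < δ)
    (hδ1 : δ < 1) {p : Fin d → ℝ} (hp0 : ∀ j, 0 ≤ p j) (hp1 : ∑ j, p j = 1) {C : ℝ}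
    (hC : 8400 ≤ C) :
    sampleProb p {x : Fin n → Fin d |
      C * ((d : ℝ) / n + Real.sqrt d * Real.log (1 / δ) / n
          + (d : ℝ) * Real.log (1 / δ) ^ 2 / n ^ 2) ≤
        chiSq p (fun j =>
          ((count x j : ℝ) + max 1 (Real.log (1 / δ) / Real.sqrt d)) /
            ((n : ℝ) + max 1 (Real.log (1 / δ) / Real.sqrt d) * d))} ≤ 2 * δ := by
  set L := Real.log (1 / δ) with hL_def
  have hp : p ∈ stdSimplex ℝ (Fin d) := ⟨hp0, hp1⟩
  have hL : 0 < L := Real.log_pos (one_lt_one_div hδ0 hδ1)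
  have hexp : Real.exp (-L) = δ := by
    rw [hL_def, one_div, Real.log_inv, neg_neg, Real.exp_log hδ0]
  set A := 32 * (√(min (n : ℝ) d) + L) with hA
  calc _ ≤ sampleProb p
          ({x | 32 * d + 8 * L ≤ ∑ j, relSqDev (n * p j) (count x j)} ∪
            {x | A ≤ ∑ j, undercount (truncSq A (n * p j)) (n * p j) (count x j)}) := by
        refine sampleProb_mono hp0 fun x hx => ?_
        by_contra! hgood
        simp only [Set.mem_union, Set.mem_ofPred_eq, not_or, not_le] at hgood
        have hlt := chiSq_smoothed_lt_rate hp (Nat.cast_pos.2 hn) hL rfl hA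
          (fun j => (count x j).cast_nonneg) hgood.1.le hgood.2.le
        refine absurd (hlt.trans_le ?_) (not_lt.2 hx)
        gcongr
    _ ≤ Real.exp (-L) + Real.exp (-L) := (sampleProb_union_le hp0 _ _).trans
        (add_le_add (sampleProb_sum_relSqDev_ge_le hp L) (sampleProb_sum_undercount_ge_le hp hL hA))
    _ = 2 * δ := by rw [hexp, two_mul]

theorem conf_dependent_upper_bound (n d : ℕ) (hn : 12 ≤ n) (hd : 2 ≤ d)
    (δ : ℝ) (hδl : Real.exp (-(n : ℝ) / 6) < δ) (hδu : δ < Real.exp (-2))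
    (p : Fin d → ℝ) (hp0 : ∀ j, 0 ≤ p j) (hp1 : ∑ j, p j = 1) :
    sampleProb p {x : Fin n → Fin d |
      91190 * ((d : ℝ) / n + Real.sqrt d * Real.log (1 / δ) / n
          + (d : ℝ) * Real.log (1 / δ) ^ 2 / n ^ 2) ≤
        chiSq p (fun j =>
          ((count x j : ℝ) + max 1 (Real.log (1 / δ) / Real.sqrt d)) /
            ((n : ℝ) + max 1 (Real.log (1 / δ) / Real.sqrt d) * d))} ≤ 4 * δ :=
  (conf_dependent_upper_bound_general (by omega) ((Real.exp_pos _).trans hδl)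
    (hδu.trans (Real.exp_lt_one_iff.2 (by norm_num))) hp0 hp1 (by norm_num)).trans
      (by linarith [Real.exp_pos (-(n : ℝ) / 6)])
end

section
/- Let n ≥ d ≥ 2 be integers and κ ≥ 1. Let Φ : {1,…,d}^n → Δ_d be an estimator such that, writing P̂_n = Φ(X_1, …, X_n) for an i.i.d. sample from P, for every P ∈ Δ_d the event {χ²(P, P̂_n) ≤ κd/n} has positive probability. Then for every δ ∈ (e^{-n}, e^{-6.32κ}) there exists a distribution P ∈ Δ_d such that the probability that χ²(P, P̂_n) ≥ (0.04/κ) · log²(1/δ)/n is at least δ. -/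
open Finset
open scoped ENNReal

/-- χ²-divergence, valued in `ℝ≥0∞`: a term with `q j = 0` and `p j ≠ q j`
contributes `+∞` (and contributes `0` if `p j = q j`). -/
noncomputable def chiSqE {d : ℕ} (p q : Fin d → ℝ) : ℝ≥0∞ :=
  ∑ j, ENNReal.ofReal ((p j - q j) ^ 2) / ENNReal.ofReal (q j)

/-!
With `e_j` the point mass at `j`, smallness of `χ²(e_j, Φ(j, …, j))` forces some `i ≠ j` to receive
an estimate of at most `2 κ / n`. Moving mass `1 - exp (-log (1 / δ) / n)`, which is of order
`log (1 / δ) / n`, from `j` to `i` leaves the constant sample `(j, …, j)` probability exactly `δ`,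
while the `i`-th term of the divergence becomes at least of order `log (1 / δ) ^ 2 / (κ n)`.
-/

section SampleProb

variable {n d : ℕ} {E : Set (Fin n → Fin d)}

theorem sampleProb_single (j : Fin d) :
    sampleProb (Pi.single j 1) E = E.indicator 1 (fun _ ↦ j) := by
  classical
  have single_prod_eq_zero {x : Fin n → Fin d} (hx : x ≠ fun _ ↦ j) :
      ∏ k, (Pi.single j 1 : Fin d → ℝ) (x k) = 0 := by
    obtain ⟨k, hk⟩ := Function.ne_iff.mp hx
    exact prod_eq_zero (mem_univ k) (Pi.single_eq_of_ne hk 1)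
  rw [sampleProb, sum_eq_single (fun _ ↦ j) (fun x _ hx ↦ ?_) (by simp)]
  · simp [Set.indicator_apply]
  · rw [Set.indicator_apply, single_prod_eq_zero hx, ite_self]

theorem sampleProb_single_pos {j : Fin d} :
    0 < sampleProb (Pi.single j 1) E ↔ (fun _ ↦ j) ∈ E := by
  classical
  rw [sampleProb_single, Set.indicator_apply]
  split_ifs with hj <;> simp [hj]

theorem prod_le_sampleProb {p : Fin d → ℝ} (hp : ∀ k, 0 ≤ p k) {x : Fin n → Fin d}
    (hx : x ∈ E) : ∏ k, p (x k) ≤ sampleProb p E := by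
  have indicator_nonneg (y : Fin n → Fin d) : 0 ≤ E.indicator (fun y ↦ ∏ k, p (y k)) y :=
    Set.indicator_nonneg (fun _ _ ↦ prod_nonneg fun _ _ ↦ hp _) y
  simpa only [sampleProb, Set.indicator_of_mem hx] using
    single_le_sum (fun y _ ↦ indicator_nonneg y) (mem_univ x)

end SampleProb

section ChiSq

variable {d : ℕ} {p q : Fin d → ℝ}

theorem ofReal_sum_le_chiSqE (hq : ∀ k, 0 ≤ q k) {s : Finset (Fin d)}
    (hs : ∀ k ∈ s, p k = 0) : ENNReal.ofReal (∑ k ∈ s, q k) ≤ chiSqE p q := by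
  rw [ENNReal.ofReal_sum_of_nonneg fun k _ ↦ hq k]
  refine (sum_le_sum fun k hk ↦ ?_).trans (sum_le_sum_of_subset s.subset_univ)
  rcases (hq k).eq_or_lt with hk0 | hk0
  · simp [← hk0]
  · rw [← ENNReal.ofReal_div_of_pos hk0, hs k hk, zero_sub, neg_sq, sq,
      mul_div_cancel_right₀ _ hk0.ne']

theorem ofReal_sq_div_le_chiSqE {i : Fin d} {a g : ℝ} (ha : 0 < a) (hqa : q i ≤ a)
    (hg : 0 ≤ g) (hgap : g ≤ p i - q i) : ENNReal.ofReal (g ^ 2 / a) ≤ chiSqE p q :=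
  calc ENNReal.ofReal (g ^ 2 / a)
      = ENNReal.ofReal (g ^ 2) / ENNReal.ofReal a := ENNReal.ofReal_div_of_pos ha
    _ ≤ ENNReal.ofReal ((p i - q i) ^ 2) / ENNReal.ofReal (q i) := by gcongr
    _ ≤ chiSqE p q :=
      single_le_sum (f := fun k ↦ ENNReal.ofReal ((p k - q k) ^ 2) / ENNReal.ofReal (q k))
        (fun _ _ ↦ zero_le) (mem_univ i)

theorem exists_ne_mul_le_of_chiSqE_single_le (hd : 2 ≤ d) (hq : ∀ k, 0 ≤ q k) {j : Fin d}
    {c : ℝ} (hc : 0 ≤ c) (h : chiSqE (Pi.single j 1) q ≤ ENNReal.ofReal c) :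
    ∃ i ≠ j, ((d : ℝ) - 1) * q i ≤ c := by
  have sum_le : ∑ k ∈ univ.erase j, q k ≤ c :=
    (ENNReal.ofReal_le_ofReal_iff hc).mp <|
      (ofReal_sum_le_chiSqE hq fun _ hk ↦ Pi.single_eq_of_ne (ne_of_mem_erase hk) 1).trans h
  have card_erase : #(univ.erase j) = d - 1 := by simp
  have nonempty : (univ.erase j).Nonempty := card_pos.mp (by omega)
  obtain ⟨i, hi, hmin⟩ := exists_min_image _ q nonempty
  refine ⟨i, ne_of_mem_erase hi, le_trans ?_ sum_le⟩
  simpa [card_erase, Nat.cast_sub (show 1 ≤ d by omega)] using card_nsmul_le_sum _ _ _ hmin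

theorem exists_ne_le_two_mul_of_chiSqE_single_le (hd : 2 ≤ d) (hq : ∀ k, 0 ≤ q k) {j : Fin d}
    {c : ℝ} (hc : 0 ≤ c) (h : chiSqE (Pi.single j 1) q ≤ ENNReal.ofReal (c * d)) :
    ∃ i ≠ j, q i ≤ 2 * c := by
  obtain ⟨i, hij, hi⟩ := exists_ne_mul_le_of_chiSqE_single_le hd hq (by positivity) h
  have hd' : (2 : ℝ) ≤ d := by exact_mod_cast hd
  have pred_pos : (0 : ℝ) < d - 1 := by linarith
  refine ⟨i, hij, le_of_mul_le_mul_left ?_ pred_pos⟩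
  calc ((d : ℝ) - 1) * q i ≤ c * d := hi
    _ ≤ c * (2 * (d - 1)) := by gcongr; linarith
    _ = (d - 1) * (2 * c) := by ring

end ChiSq

section TwoPoint

variable {ι : Type*} [DecidableEq ι] {i j : ι} {r : ℝ}

/-- The distribution with mass `r` at `j` and `1 - r` at `i`, a perturbation of the point mass at
`j`; for `i = j` it is that point mass. -/
def twoPoint (j i : ι) (r : ℝ) : ι → ℝ := Pi.single j r + Pi.single i (1 - r)

theorem twoPoint_apply_left (hij : i ≠ j) : twoPoint j i r j = r := by
  simp [twoPoint, hij.symm]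

theorem twoPoint_apply_right (hij : i ≠ j) : twoPoint j i r i = 1 - r := by
  simp [twoPoint, hij]

theorem twoPoint_mem_stdSimplex [Fintype ι] (h0 : 0 ≤ r) (h1 : r ≤ 1) :
    twoPoint j i r ∈ stdSimplex ℝ ι :=
  have twoPoint_nonneg : 0 ≤ twoPoint j i r :=
    add_nonneg (Pi.single_nonneg.mpr h0) (Pi.single_nonneg.mpr (sub_nonneg.mpr h1))
  ⟨twoPoint_nonneg, by simp [twoPoint, sum_add_distrib]⟩

theorem pow_le_sampleProb_twoPoint {n d : ℕ} {E : Set (Fin n → Fin d)} {i j : Fin d} {r : ℝ}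
    (hij : i ≠ j) (h0 : 0 ≤ r) (h1 : r ≤ 1) (hE : (fun _ ↦ j) ∈ E) :
    r ^ n ≤ sampleProb (twoPoint j i r) E := by
  have twoPoint_nonneg : ∀ k, 0 ≤ twoPoint j i r k := (twoPoint_mem_stdSimplex h0 h1).1
  simpa [twoPoint_apply_left hij] using prod_le_sampleProb twoPoint_nonneg hE

end TwoPoint

theorem exp_neg_le_one_sub_mul {u : ℝ} (h0 : 0 ≤ u) (h1 : u ≤ 1) :
    Real.exp (-u) ≤ 1 - (1 - Real.exp (-1)) * u := by
  have chord := convexOn_exp.2 (Set.mem_univ (0 : ℝ)) (Set.mem_univ (-1 : ℝ))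
    (sub_nonneg.mpr h1) h0 (sub_add_cancel 1 u)
  simp only [smul_eq_mul, mul_zero, zero_add, Real.exp_zero, mul_neg, mul_one] at chord
  linarith

-- The constants fit because `1 - e⁻ᵘ ≥ 0.62 u`, `0.62 - 2 / 6.32 ≥ 0.3` and `0.3 ^ 2 / 2 ≥ 0.04`.
theorem ofReal_le_chiSqE_twoPoint {d : ℕ} {q : Fin d → ℝ} {i j : Fin d} (hij : i ≠ j)
    {c u : ℝ} (hc : 0 < c) (hqc : q i ≤ 2 * c) (hcu : 6.32 * c ≤ u) (hu : u ≤ 1) :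
    ENNReal.ofReal (0.04 * (u ^ 2 / c)) ≤ chiSqE (twoPoint j i (Real.exp (-u))) q := by
  have hu0 : 0 ≤ u := by linarith
  have mass_i : 0.62 * u ≤ 1 - Real.exp (-u) := by
    nlinarith [exp_neg_le_one_sub_mul hu0 hu, Real.exp_neg_one_lt_d9]
  have gap : 0.3 * u ≤ twoPoint j i (Real.exp (-u)) i - q i := by
    rw [twoPoint_apply_right hij]
    linarith
  have scale : 0.04 * (u ^ 2 / c) ≤ (0.3 * u) ^ 2 / (2 * c) := by
    calc 0.04 * (u ^ 2 / c) ≤ 0.045 * (u ^ 2 / c) := by gcongr; norm_num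
      _ = (0.3 * u) ^ 2 / (2 * c) := by ring
  exact (ENNReal.ofReal_le_ofReal scale).trans
    (ofReal_sq_div_le_chiSqE (by positivity) hqc (by positivity) gap)

theorem lower_bound_conf_indep_tail_general (n d : ℕ) (hd : 2 ≤ d) (κ : ℝ) (hκ : 0 < κ)
    (Φ : (Fin n → Fin d) → (Fin d → ℝ)) (hΦ : ∀ x, Φ x ∈ stdSimplex ℝ (Fin d)) (j : Fin d)
    (hgood : 0 < sampleProb (Pi.single j 1)
      {x | chiSqE (Pi.single j 1) (Φ x) ≤ ENNReal.ofReal (κ * d / n)})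
    (δ : ℝ) (hδl : Real.exp (-(n : ℝ)) < δ) (hδu : δ < Real.exp (-(6.32 * κ))) :
    ∃ p ∈ stdSimplex ℝ (Fin d),
      δ ≤ sampleProb p {x |
        ENNReal.ofReal ((0.04 / κ) * (Real.log (1 / δ) ^ 2 / n)) ≤ chiSqE p (Φ x)} := by
  obtain ⟨L, rfl⟩ : ∃ L, Real.exp (-L) = δ :=
    ⟨-Real.log δ, by rw [neg_neg, Real.exp_log ((Real.exp_pos _).trans hδl)]⟩
  rw [one_div, ← Real.exp_neg, neg_neg, Real.log_exp]
  have hLn : L < n := neg_lt_neg_iff.mp (Real.exp_lt_exp.mp hδl)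
  have hκL : 6.32 * κ < L := neg_lt_neg_iff.mp (Real.exp_lt_exp.mp hδu)
  have hL : 0 < L := by linarith
  have hn : (0 : ℝ) < n := hL.trans hLn
  rw [← div_mul_eq_mul_div] at hgood
  have good_const : chiSqE (Pi.single j 1) (Φ fun _ ↦ j) ≤ ENNReal.ofReal (κ / n * d) :=
    sampleProb_single_pos.mp hgood
  obtain ⟨i, hij, hi⟩ :=
    exists_ne_le_two_mul_of_chiSqE_single_le hd (hΦ _).1 (by positivity) good_const
  have exp_le_one : Real.exp (-(L / n)) ≤ 1 :=
    Real.exp_le_one_iff.mpr (neg_nonpos.mpr (by positivity))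
  have exp_pow : Real.exp (-(L / n)) ^ n = Real.exp (-L) := by
    rw [← Real.exp_nat_mul, mul_neg, mul_div_cancel₀ _ hn.ne']
  have tail_const := ofReal_le_chiSqE_twoPoint hij (u := L / n) (by positivity) hi
    (by rw [← mul_div_assoc]; gcongr) ((div_le_one hn).mpr hLn.le)
  have rate : 0.04 * ((L / n) ^ 2 / (κ / n)) = 0.04 / κ * (L ^ 2 / n) := by field_simp
  rw [rate] at tail_const
  exact ⟨twoPoint j i (Real.exp (-(L / n))), twoPoint_mem_stdSimplex (Real.exp_nonneg _) exp_le_one,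
    exp_pow.ge.trans (pow_le_sampleProb_twoPoint hij (Real.exp_nonneg _) exp_le_one tail_const)⟩

theorem lower_bound_conf_indep_tail (n d : ℕ) (hdn : d ≤ n) (hd : 2 ≤ d)
    (κ : ℝ) (hκ : 1 ≤ κ)
    (Φ : (Fin n → Fin d) → (Fin d → ℝ))
    (hΦ : ∀ x, (∀ j, 0 ≤ Φ x j) ∧ ∑ j, Φ x j = 1)
    (hgood : ∀ p : Fin d → ℝ, (∀ j, 0 ≤ p j) → ∑ j, p j = 1 →
      0 < sampleProb p {x | chiSqE p (Φ x) ≤ ENNReal.ofReal (κ * d / n)})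
    (δ : ℝ) (hδl : Real.exp (-(n : ℝ)) < δ) (hδu : δ < Real.exp (-(6.32 * κ))) :
    ∃ p : Fin d → ℝ, (∀ j, 0 ≤ p j) ∧ (∑ j, p j = 1) ∧
      δ ≤ sampleProb p {x |
        ENNReal.ofReal ((0.04 / κ) * (Real.log (1 / δ) ^ 2 / n)) ≤
          chiSqE p (Φ x)} := by
  obtain ⟨p, ⟨hp0, hp1⟩, hp⟩ := lower_bound_conf_indep_tail_general n d hd κ (by linarith) Φ hΦ
    ⟨0, by omega⟩ (hgood _ (single_mem_stdSimplex ℝ _).1 (single_mem_stdSimplex ℝ _).2) δ hδl hδu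
  exact ⟨p, hp0, hp1, hp⟩
end
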